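/- Let k be a natural number and let C be an s-extremal singly even self-dual [24k+20, 12k+10, 4k+4] code (so C is also extremal). Then both neighbors N₁(C) = C₀ ∪ C₁ and N₃(C) = C₀ ∪ C₃ of C are also s-extremal singly even self-dual [24k+20, 12k+10, 4k+4] codes (i.e., each is singly even self-dual with minimum weight 4k+4, and its shadow has minimum weight 4k+6). -/

import Mathlib

open Finset

/-- Hamming weight of a binary vector. -/
def wt {n : ℕ} (x : Fin n → ZMod 2) : ℕ := hammingNorm x

/-- The dual of a set of binary vectors with respect to the standard inner product. -/
def dualSet {n : ℕ} (C : Set (Fin n → ZMod 2)) : Set (Fin n → ZMod 2) :=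
  {x | ∀ y ∈ C, ∑ i, x i * y i = 0}

/-- A binary linear code is self-dual if it equals its dual code. -/
def IsSelfDual {n : ℕ} (C : Submodule (ZMod 2) (Fin n → ZMod 2)) : Prop :=
  (C : Set (Fin n → ZMod 2)) = dualSet (C : Set (Fin n → ZMod 2))

/-- A self-dual code is singly even if some codeword has weight not divisible by 4. -/
def IsSinglyEvenSelfDual {n : ℕ} (C : Submodule (ZMod 2) (Fin n → ZMod 2)) : Prop :=
  IsSelfDual C ∧ ∃ x ∈ C, ¬ (4 ∣ wt x)

/-- The doubly even subcode `C₀` of `C` (as a set): codewords of weight ≡ 0 (mod 4). -/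
def evenSub {n : ℕ} (C : Submodule (ZMod 2) (Fin n → ZMod 2)) : Set (Fin n → ZMod 2) :=
  {x | x ∈ C ∧ 4 ∣ wt x}

/-- The shadow `S = C₀^⊥ \ C` of a singly even self-dual code. -/
def shadow {n : ℕ} (C : Submodule (ZMod 2) (Fin n → ZMod 2)) : Set (Fin n → ZMod 2) :=
  dualSet (evenSub C) \ (C : Set (Fin n → ZMod 2))

/-- The minimum (nonzero) weight of a set of vectors. -/
noncomputable def minWtSet {n : ℕ} (S : Set (Fin n → ZMod 2)) : ℕ :=
  sInf {w | ∃ x ∈ S, x ≠ 0 ∧ wt x = w}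

/-- The minimum weight of a code. -/
noncomputable def minWt {n : ℕ} (C : Submodule (ZMod 2) (Fin n → ZMod 2)) : ℕ :=
  minWtSet (C : Set (Fin n → ZMod 2))

/-- A singly even self-dual code of length `n` is s-extremal if
`d(S) = n/2 + 4 - 2 d(C)`. -/
def IsSExtremal {n : ℕ} (C : Submodule (ZMod 2) (Fin n → ZMod 2)) : Prop :=
  IsSinglyEvenSelfDual C ∧
    (minWtSet (shadow C) : ℤ) = ((n / 2 : ℕ) : ℤ) + 4 - 2 * (minWt C : ℤ)

/-- Two codes are equivalent if one is obtained from the other by permuting coordinates. -/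
def CodeEquiv {n : ℕ} (C D : Submodule (ZMod 2) (Fin n → ZMod 2)) : Prop :=
  ∃ σ : Equiv.Perm (Fin n),
    Submodule.map (LinearMap.funLeft (ZMod 2) (ZMod 2) σ) C = D

/-- The neighbor `C₀ ∪ (t + C₀)` of `C` obtained from a shadow vector `t`:
the span of the doubly even subcode together with `t`. -/
def neighborCode {n : ℕ} (C : Submodule (ZMod 2) (Fin n → ZMod 2))
    (t : Fin n → ZMod 2) : Submodule (ZMod 2) (Fin n → ZMod 2) :=
  Submodule.span (ZMod 2) (evenSub C ∪ {t})

/-!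
Let `C₀` be the doubly even subcode of `C` and `N = C₀ ∪ (t + C₀)`. As `t` has weight `2` modulo
`4`, `C₀` is also the doubly even subcode of `N`, so the shadow of `N` consists of `C \ C₀` and the
half of the shadow of `C` outside `N`. This gives the lower bounds on the weights in `N` and its
shadow.

It remains to see that the bound `s = 4k + 6` is attained in the shadow of `N`. The shadow of a
self-dual code of minimum weight at least `d` is a coset of the code, hence an orthogonal array of
strength `d - 1`: polynomials of degree less than `d` in the weight have the same mean over it as
over `𝔽₂ⁿ`. If `s = n / 2 + 4 - 2d` bounds the shadow weights from below and they are all congruent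
to `s` modulo `4`, then at most `d - 2` of them differ from `s`, and whether `s` occurs is decided
by the mean over `𝔽₂ⁿ` of the polynomial vanishing at the others. This criterion depends on `n`, `d`
and `s` only, so it holds for `N` because it holds for `C`.
-/

section Weight

variable {n : ℕ} {x : Fin n → ZMod 2}

theorem wt_eq_sum_val (x : Fin n → ZMod 2) : wt x = ∑ i, (x i).val := by
  have val_eq_ite : ∀ a : ZMod 2, a.val = if a ≠ 0 then 1 else 0 := by decide
  simp only [wt, hammingNorm, card_filter, val_eq_ite]

theorem wt_add_add_two_mul_wt_mul (x y : Fin n → ZMod 2) :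
    wt (x + y) + 2 * wt (x * y) = wt x + wt y := by
  have val_add_add : ∀ a b : ZMod 2, (a + b).val + 2 * (a * b).val = a.val + b.val := by decide
  simp only [wt_eq_sum_val, mul_sum, ← sum_add_distrib, Pi.add_apply, Pi.mul_apply, val_add_add]

theorem wt_add_le (x y : Fin n → ZMod 2) : wt (x + y) ≤ wt x + wt y := by
  have := wt_add_add_two_mul_wt_mul x y
  lia

theorem natCast_wt_mul (x y : Fin n → ZMod 2) : (wt (x * y) : ZMod 2) = x ⬝ᵥ y := by
  simp [wt_eq_sum_val, dotProduct]

theorem natCast_wt (x : Fin n → ZMod 2) : (wt x : ZMod 2) = x ⬝ᵥ x := by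
  have mul_self : ∀ a : ZMod 2, a * a = a := by decide
  have mul_self_vec : x * x = x := funext fun i ↦ mul_self (x i)
  rw [← natCast_wt_mul, mul_self_vec]

theorem dotProduct_self_eq_zero_iff_even_wt : x ⬝ᵥ x = 0 ↔ Even (wt x) := by
  rw [← natCast_wt, ZMod.natCast_eq_zero_iff_even]

theorem wt_add_modEq (x y : Fin n → ZMod 2) :
    wt (x + y) ≡ wt x + wt y + 2 * (x ⬝ᵥ y).val [MOD 4] := by
  have := wt_add_add_two_mul_wt_mul x y
  rw [← natCast_wt_mul, ZMod.val_natCast]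
  unfold Nat.ModEq
  lia

theorem wt_one : wt (1 : Fin n → ZMod 2) = n := by
  simp [wt, hammingNorm]

theorem wt_add_one_add_wt (x : Fin n → ZMod 2) : wt (x + 1) + wt x = n := by
  have := wt_add_add_two_mul_wt_mul x 1
  rw [mul_one, wt_one] at this
  lia

theorem wt_single_one (i : Fin n) : wt (Pi.single i 1 : Fin n → ZMod 2) = 1 := by
  simp [wt, hammingNorm, Pi.single_apply, filter_eq']

end Weight

section MinWt

variable {n m : ℕ}

theorem minWtSet_eq_iff {S : Set (Fin n → ZMod 2)} (hm : m ≠ 0) :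
    minWtSet S = m ↔ (∃ x ∈ S, x ≠ 0 ∧ wt x = m) ∧ ∀ x ∈ S, x ≠ 0 → m ≤ wt x := by
  constructor
  · rintro rfl
    exact ⟨Nat.sInf_mem (Nat.nonempty_of_pos_sInf (Nat.pos_of_ne_zero hm)),
      fun x hx hx0 ↦ Nat.sInf_le ⟨x, hx, hx0, rfl⟩⟩
  · rintro ⟨hex, hle⟩
    refine IsLeast.csInf_eq ⟨hex, ?_⟩
    rintro _ ⟨x, hx, hx0, rfl⟩
    exact hle x hx hx0

theorem ne_zero_of_mem_shadow {C : Submodule (ZMod 2) (Fin n → ZMod 2)} {x : Fin n → ZMod 2}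
    (hx : x ∈ shadow C) : x ≠ 0 := by
  rintro rfl
  exact hx.2 C.zero_mem

theorem minWtSet_shadow_eq_iff {C : Submodule (ZMod 2) (Fin n → ZMod 2)} (hm : m ≠ 0) :
    minWtSet (shadow C) = m ↔ (∃ x ∈ shadow C, wt x = m) ∧ ∀ x ∈ shadow C, m ≤ wt x := by
  rw [minWtSet_eq_iff hm]
  exact and_congr
    (exists_congr fun x ↦ and_congr_right fun hx ↦ and_iff_right (ne_zero_of_mem_shadow hx))
    (forall₂_congr fun x hx ↦ forall_prop_of_true (ne_zero_of_mem_shadow hx))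

end MinWt

section SelfDual

variable {n : ℕ} {C : Submodule (ZMod 2) (Fin n → ZMod 2)} {x y : Fin n → ZMod 2}

theorem mem_dualSet_iff {S : Set (Fin n → ZMod 2)} : x ∈ dualSet S ↔ ∀ y ∈ S, x ⬝ᵥ y = 0 :=
  Iff.rfl

theorem mem_evenSub_iff : x ∈ evenSub C ↔ x ∈ C ∧ 4 ∣ wt x :=
  Iff.rfl

theorem dualSet_span (S : Set (Fin n → ZMod 2)) :
    dualSet (Submodule.span (ZMod 2) S : Set (Fin n → ZMod 2)) = dualSet S := by
  ext x
  exact Submodule.span_le (p := (dotProductBilin (ZMod 2) (ZMod 2) x).ker)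

namespace IsSelfDual

theorem mem_iff (hC : IsSelfDual C) : x ∈ C ↔ ∀ y ∈ C, x ⬝ᵥ y = 0 :=
  Set.ext_iff.mp hC x

theorem dotProduct_eq_zero (hC : IsSelfDual C) (hx : x ∈ C) (hy : y ∈ C) : x ⬝ᵥ y = 0 :=
  hC.mem_iff.mp hx y hy

theorem subset_dualSet_evenSub (hC : IsSelfDual C) :
    (C : Set (Fin n → ZMod 2)) ⊆ dualSet (evenSub C) :=
  fun _ hx _ hy ↦ hC.dotProduct_eq_zero hx hy.1

theorem even_wt (hC : IsSelfDual C) (hx : x ∈ C) : Even (wt x) :=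
  dotProduct_self_eq_zero_iff_even_wt.mp (hC.dotProduct_eq_zero hx hx)

theorem wt_mod_four_eq_two (hC : IsSelfDual C) (hx : x ∈ C) (h4 : ¬ 4 ∣ wt x) :
    wt x % 4 = 2 := by
  have := (hC.even_wt hx).two_dvd
  lia

theorem wt_add_modEq_of_mem (hC : IsSelfDual C) (hx : x ∈ C) (hy : y ∈ C) :
    wt (x + y) ≡ wt x + wt y [MOD 4] := by
  simpa [hC.dotProduct_eq_zero hx hy] using wt_add_modEq x y

theorem one_mem (hC : IsSelfDual C) : 1 ∈ C := by
  refine hC.mem_iff.mpr fun y hy ↦ ?_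
  rw [← natCast_wt_mul, one_mul, natCast_wt, hC.dotProduct_eq_zero hy hy]

theorem two_mul_finrank (hC : IsSelfDual C) : 2 * Module.finrank (ZMod 2) C = n := by
  let B : LinearMap.BilinForm (ZMod 2) (Fin n → ZMod 2) := dotProductBilin (ZMod 2) (ZMod 2)
  have hB : B.Nondegenerate :=
    ⟨fun x hx ↦ dotProduct_eq_zero_iff.mp hx,
      fun x hx ↦ dotProduct_eq_zero_iff.mp fun y ↦ (dotProduct_comm x y).trans (hx y)⟩
  have orthogonal_eq : B.orthogonal C = C := by
    ext x
    rw [LinearMap.BilinForm.mem_orthogonal_iff, hC.mem_iff]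
    exact forall₂_congr fun y _ ↦ by rw [dotProduct_comm]; rfl
  have finrank_orthogonal := LinearMap.BilinForm.finrank_orthogonal hB C
  have finrank_le := Submodule.finrank_le C
  rw [orthogonal_eq] at finrank_orthogonal
  rw [Module.finrank_fin_fun] at finrank_orthogonal finrank_le
  lia

/-- The doubly even subcode `C₀` of a self-dual code `C`, as a linear code. -/
def doublyEvenSubcode (hC : IsSelfDual C) : Submodule (ZMod 2) (Fin n → ZMod 2) where
  carrier := evenSub C
  zero_mem' := ⟨C.zero_mem, by simp [wt]⟩
  add_mem' := fun hx hy ↦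
    ⟨C.add_mem hx.1 hy.1,
      ((hC.wt_add_modEq_of_mem hx.1 hy.1).dvd_iff dvd_rfl).mpr (dvd_add hx.2 hy.2)⟩
  smul_mem' := fun a x hx ↦ by
    obtain rfl | rfl : a = 0 ∨ a = 1 := by decide +revert
    · simp [evenSub, wt]
    · simpa using hx

end IsSelfDual

end SelfDual

section Shadow

variable {n : ℕ} {C : Submodule (ZMod 2) (Fin n → ZMod 2)} {s t x : Fin n → ZMod 2}

theorem add_notMem_of_mem_shadow (ht : t ∈ shadow C) (hx : x ∈ C) : x + t ∉ C :=
  fun h ↦ ht.2 ((C.add_mem_iff_right hx).mp h)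

namespace IsSelfDual

theorem dotProduct_eq_zero_iff_of_mem_shadow (hC : IsSelfDual C) (hs : s ∈ shadow C)
    (hx : x ∈ C) : s ⬝ᵥ x = 0 ↔ 4 ∣ wt x := by
  refine ⟨fun hsx ↦ ?_, fun h4 ↦ hs.1 x ⟨hx, h4⟩⟩
  by_contra h4
  -- If `s` were orthogonal to `x ∈ C \ C₀`, then it would be orthogonal to `C = C₀ ∪ (x + C₀)`.
  refine hs.2 (hC.mem_iff.mpr fun y hy ↦ ?_)
  by_cases hy4 : 4 ∣ wt y
  · exact hs.1 y ⟨hy, hy4⟩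
  · have hxy4 : 4 ∣ wt (x + y) := by
      have := hC.wt_mod_four_eq_two hx h4
      have := hC.wt_mod_four_eq_two hy hy4
      have : wt (x + y) % 4 = (wt x + wt y) % 4 := hC.wt_add_modEq_of_mem hx hy
      lia
    have hsxy : s ⬝ᵥ (x + y) = 0 := hs.1 _ ⟨C.add_mem hx hy, hxy4⟩
    rwa [dotProduct_add, hsx, zero_add] at hsxy

theorem add_mem_of_mem_shadow (hC : IsSelfDual C) (hs : s ∈ shadow C) (ht : t ∈ shadow C) :
    s + t ∈ C := by
  refine hC.mem_iff.mpr fun y hy ↦ ?_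
  have hst : s ⬝ᵥ y = 0 ↔ t ⬝ᵥ y = 0 := by
    rw [hC.dotProduct_eq_zero_iff_of_mem_shadow hs hy,
      hC.dotProduct_eq_zero_iff_of_mem_shadow ht hy]
  rw [add_dotProduct]
  generalize s ⬝ᵥ y = a at hst ⊢
  generalize t ⬝ᵥ y = b at hst ⊢
  decide +revert

theorem add_mem_shadow (hC : IsSelfDual C) (hs : s ∈ shadow C) (hx : x ∈ C) :
    s + x ∈ shadow C := by
  refine ⟨fun y hy ↦ ?_, fun h ↦ hs.2 ((C.add_mem_iff_left hx).mp h)⟩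
  have hsy : s ⬝ᵥ y = 0 := hs.1 y hy
  exact (add_dotProduct s x y).trans (by rw [hsy, hC.dotProduct_eq_zero hx hy.1, add_zero])

theorem mem_shadow_iff_add_mem (hC : IsSelfDual C) (ht : t ∈ shadow C) :
    x ∈ shadow C ↔ x + t ∈ C := by
  refine ⟨fun hx ↦ hC.add_mem_of_mem_shadow hx ht, fun hx ↦ ?_⟩
  simpa [add_left_comm t x t, ZModModule.add_self] using hC.add_mem_shadow ht hx

theorem wt_add_modEq_of_mem_shadow (hC : IsSelfDual C) (hs : s ∈ shadow C) (hx : x ∈ C) :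
    wt (s + x) ≡ wt s [MOD 4] := by
  have hwt : wt (s + x) % 4 = (wt s + wt x + 2 * (s ⬝ᵥ x).val) % 4 := wt_add_modEq s x
  have hsx := hC.dotProduct_eq_zero_iff_of_mem_shadow hs hx
  unfold Nat.ModEq
  by_cases h4 : 4 ∣ wt x
  · rw [hsx.mpr h4, ZMod.val_zero] at hwt
    lia
  · have val_eq_one : (s ⬝ᵥ x).val = 1 := by
      rw [← hsx] at h4
      generalize s ⬝ᵥ x = a at h4
      decide +revert
    have := hC.wt_mod_four_eq_two hx h4
    lia

theorem wt_modEq_of_mem_shadow (hC : IsSelfDual C) (hs : s ∈ shadow C) (ht : t ∈ shadow C) :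
    wt s ≡ wt t [MOD 4] := by
  have hwt := hC.wt_add_modEq_of_mem_shadow ht (hC.add_mem_of_mem_shadow hs ht)
  rwa [add_left_comm, ZModModule.add_self, add_zero] at hwt

end IsSelfDual

end Shadow

section Neighbor

variable {n : ℕ} {C : Submodule (ZMod 2) (Fin n → ZMod 2)} {t x : Fin n → ZMod 2}

theorem mem_neighborCode_self (C : Submodule (ZMod 2) (Fin n → ZMod 2)) (t : Fin n → ZMod 2) :
    t ∈ neighborCode C t :=
  Submodule.subset_span (Or.inr rfl)

theorem evenSub_subset_neighborCode (C : Submodule (ZMod 2) (Fin n → ZMod 2))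
    (t : Fin n → ZMod 2) : evenSub C ⊆ neighborCode C t :=
  Set.subset_union_left.trans Submodule.subset_span

theorem mem_dualSet_neighborCode :
    x ∈ dualSet (neighborCode C t : Set (Fin n → ZMod 2)) ↔
      x ∈ dualSet (evenSub C) ∧ x ⬝ᵥ t = 0 := by
  rw [neighborCode, dualSet_span]
  simp only [mem_dualSet_iff, Set.union_singleton, Set.forall_mem_insert, and_comm]

namespace IsSelfDual

theorem mem_neighborCode_iff (hC : IsSelfDual C) :
    x ∈ neighborCode C t ↔ x ∈ evenSub C ∨ x + t ∈ evenSub C := by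
  have span_eq : Submodule.span (ZMod 2) (evenSub C) = hC.doublyEvenSubcode :=
    Submodule.span_eq hC.doublyEvenSubcode
  have exists_zmod_two {p : ZMod 2 → Prop} : (∃ a, p a) ↔ p 0 ∨ p 1 := Fin.exists_fin_two
  have eq_add_iff (z : Fin n → ZMod 2) : x = t + z ↔ x + t = z := by
    rw [← ZModModule.sub_eq_add x t, sub_eq_iff_eq_add']
  rw [neighborCode, Set.union_singleton, Submodule.mem_span_insert, span_eq, exists_zmod_two]
  simp only [zero_smul, zero_add, one_smul, eq_add_iff, exists_eq_right']
  rfl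

theorem isSelfDual_neighborCode (hC : IsSelfDual C) (ht : t ∈ shadow C) (hwt : Even (wt t)) :
    IsSelfDual (neighborCode C t) := by
  ext x
  rw [SetLike.mem_coe, mem_dualSet_neighborCode, hC.mem_neighborCode_iff]
  by_cases hx : x ∈ C
  · have hxt : x + t ∉ C := add_notMem_of_mem_shadow ht hx
    have hdual : x ∈ dualSet (evenSub C) := hC.subset_dualSet_evenSub hx
    have h4 := hC.dotProduct_eq_zero_iff_of_mem_shadow ht hx
    rw [dotProduct_comm] at h4
    simp [mem_evenSub_iff, hx, hxt, hdual, h4]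
  · have hdual : x ∈ dualSet (evenSub C) ↔ x + t ∈ C := by
      rw [← hC.mem_shadow_iff_add_mem ht]
      exact (and_iff_left hx).symm
    have h4 (hxt : x + t ∈ C) : x ⬝ᵥ t = 0 ↔ 4 ∣ wt (x + t) := by
      rw [← hC.dotProduct_eq_zero_iff_of_mem_shadow ht hxt, dotProduct_add,
        dotProduct_self_eq_zero_iff_even_wt.mpr hwt, add_zero, dotProduct_comm]
    simp only [mem_evenSub_iff, hx, false_and, false_or, hdual]
    exact and_congr_right fun hxt ↦ (h4 hxt).symm

theorem evenSub_neighborCode (hC : IsSelfDual C) (ht : t ∈ shadow C) (hwt : ¬ 4 ∣ wt t) :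
    evenSub (neighborCode C t) = evenSub C := by
  refine Set.Subset.antisymm (fun x ⟨hx, hx4⟩ ↦ ?_)
    fun x hx ↦ ⟨evenSub_subset_neighborCode C t hx, hx.2⟩
  refine (hC.mem_neighborCode_iff.mp hx).resolve_right fun hxt ↦ hwt ?_
  have hxs : x ∈ shadow C := (hC.mem_shadow_iff_add_mem ht).mpr hxt.1
  exact ((hC.wt_modEq_of_mem_shadow hxs ht).dvd_iff dvd_rfl).mp hx4

theorem shadow_neighborCode (hC : IsSelfDual C) (ht : t ∈ shadow C) (hwt : ¬ 4 ∣ wt t) :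
    shadow (neighborCode C t) =
      (C : Set (Fin n → ZMod 2)) \ evenSub C ∪
        shadow C \ (neighborCode C t : Set (Fin n → ZMod 2)) := by
  have hdual : dualSet (evenSub C) = ↑C ∪ shadow C :=
    (Set.union_sdiff_cancel hC.subset_dualSet_evenSub).symm
  have hinter (x) (hx : x ∈ C) : x ∈ neighborCode C t ↔ x ∈ evenSub C := by
    rw [hC.mem_neighborCode_iff, or_iff_left fun h ↦ add_notMem_of_mem_shadow ht hx h.1]
  rw [_root_.shadow, hC.evenSub_neighborCode ht hwt, hdual, Set.union_sdiff_distrib]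
  congr 1
  ext x
  exact and_congr_right fun hx ↦ not_congr (hinter x hx)

theorem mem_shadow_neighborCode_of_mem (hC : IsSelfDual C) (ht : t ∈ shadow C)
    (hwt : ¬ 4 ∣ wt t) (hx : x ∈ C) (h4 : ¬ 4 ∣ wt x) : x ∈ shadow (neighborCode C t) := by
  rw [hC.shadow_neighborCode ht hwt]
  exact Or.inl ⟨hx, fun h ↦ h4 h.2⟩

theorem le_wt_of_mem_neighborCode {d : ℕ} (hC : IsSelfDual C) (ht : t ∈ shadow C)
    (hmin : ∀ x ∈ C, x ≠ 0 → d ≤ wt x) (hshadow : ∀ x ∈ shadow C, d ≤ wt x)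
    (hx : x ∈ neighborCode C t) (hx0 : x ≠ 0) : d ≤ wt x := by
  rcases hC.mem_neighborCode_iff.mp hx with hxC | hxt
  · exact hmin x hxC.1 hx0
  · exact hshadow x ((hC.mem_shadow_iff_add_mem ht).mpr hxt.1)

theorem le_wt_of_mem_shadow_neighborCode {d : ℕ} (hC : IsSelfDual C) (ht : t ∈ shadow C)
    (hwt : ¬ 4 ∣ wt t) (hd : 4 ∣ d) (hmin : ∀ x ∈ C, x ≠ 0 → d ≤ wt x)
    (hshadow : ∀ x ∈ shadow C, d + 2 ≤ wt x) (hx : x ∈ shadow (neighborCode C t)) :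
    d + 2 ≤ wt x := by
  have hx0 : x ≠ 0 := ne_zero_of_mem_shadow hx
  rw [hC.shadow_neighborCode ht hwt] at hx
  rcases hx with ⟨hxC, hxE⟩ | ⟨hxS, -⟩
  · have h4 : ¬ 4 ∣ wt x := fun h4 ↦ hxE ⟨hxC, h4⟩
    have le_wt : d ≤ wt x := hmin x hxC hx0
    have wt_mod_four : wt x % 4 = 2 := hC.wt_mod_four_eq_two hxC h4
    lia
  · exact hshadow x hxS

end IsSelfDual

end Neighbor

section LowDegree

variable {n r s : ℕ}

/-- The character `x ↦ (-1) ^ (a ⬝ᵥ x)` of `𝔽₂ⁿ`. -/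
def signChar (a : Fin n → ZMod 2) : AddChar (Fin n → ZMod 2) ℚ :=
  (AddChar.zmodChar 2 (neg_one_sq : (-1 : ℚ) ^ 2 = 1)).compAddMonoidHom
    (dotProductBilin (ZMod 2) (ZMod 2) a).toAddMonoidHom

theorem signChar_apply (a x : Fin n → ZMod 2) : signChar a x = (-1) ^ (a ⬝ᵥ x).val := rfl

theorem signChar_zero : signChar (0 : Fin n → ZMod 2) = 1 := by
  ext x
  simp [signChar_apply]

theorem signChar_add (a b : Fin n → ZMod 2) : signChar (a + b) = signChar a * signChar b := by
  ext x
  rw [AddChar.mul_apply, signChar_apply, signChar_apply, signChar_apply, add_dotProduct, ← pow_add,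
    ZMod.val_add, ← neg_one_pow_eq_pow_mod_two]

/-- The functions on `𝔽₂ⁿ` of degree at most `r`, that is, those whose Fourier expansion involves
only the characters of weight at most `r`. -/
def lowDegree (n r : ℕ) : Submodule ℚ ((Fin n → ZMod 2) → ℚ) :=
  Submodule.span ℚ ((fun a ↦ ⇑(signChar a)) '' {a | wt a ≤ r})

theorem signChar_mem_lowDegree {a : Fin n → ZMod 2} (ha : wt a ≤ r) :
    ⇑(signChar a) ∈ lowDegree n r :=
  Submodule.subset_span ⟨a, ha, rfl⟩

theorem lowDegree_mono (h : r ≤ s) : lowDegree n r ≤ lowDegree n s :=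
  Submodule.span_mono (Set.image_mono fun _ ha ↦ le_trans ha h)

theorem one_mem_lowDegree : 1 ∈ lowDegree n r := by
  have := signChar_mem_lowDegree (r := r) (a := (0 : Fin n → ZMod 2)) (by simp [wt])
  rwa [signChar_zero] at this

theorem lowDegree_mul_le : lowDegree n r * lowDegree n s ≤ lowDegree n (r + s) := by
  rw [lowDegree, lowDegree, Submodule.span_mul_span, Submodule.span_le, Set.mul_subset_iff]
  rintro _ ⟨a, ha, rfl⟩ _ ⟨b, hb, rfl⟩
  rw [← AddChar.coe_mul, ← signChar_add]
  exact signChar_mem_lowDegree ((wt_add_le a b).trans (add_le_add ha hb))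

theorem pow_mem_lowDegree {f : (Fin n → ZMod 2) → ℚ} (hf : f ∈ lowDegree n 1) :
    f ^ r ∈ lowDegree n r := by
  induction r with
  | zero => simpa using one_mem_lowDegree
  | succ r ih => simpa [pow_succ] using lowDegree_mul_le (Submodule.mul_mem_mul ih hf)

theorem wt_mem_lowDegree : (fun x ↦ (wt x : ℚ)) ∈ lowDegree n 1 := by
  have val_eq : ∀ a : ZMod 2, (a.val : ℚ) = 2⁻¹ * (1 - (-1) ^ a.val) := by
    intro a
    obtain rfl | rfl : a = 0 ∨ a = 1 := by decide +revert
    all_goals norm_num [ZMod.val_one]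
  have wt_eq : (fun x : Fin n → ZMod 2 ↦ (wt x : ℚ)) =
      ∑ i, (2⁻¹ : ℚ) • (1 - ⇑(signChar (Pi.single i 1 : Fin n → ZMod 2))) := by
    ext x
    simp [wt_eq_sum_val, val_eq, signChar_apply]
  rw [wt_eq]
  exact Submodule.sum_mem _ fun i _ ↦ Submodule.smul_mem _ _ (Submodule.sub_mem _
    one_mem_lowDegree (signChar_mem_lowDegree (wt_single_one i).le))

open Polynomial in
theorem eval_wt_mem_lowDegree {p : ℚ[X]} (hp : p.natDegree ≤ r) :
    (fun x ↦ p.eval (wt x : ℚ)) ∈ lowDegree n r := by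
  have eval_eq : (fun x : Fin n → ZMod 2 ↦ p.eval (wt x : ℚ)) =
      ∑ j ∈ range (r + 1), p.coeff j • (fun x ↦ (wt x : ℚ)) ^ j := by
    ext x
    simp [eval_eq_sum_range' (Nat.lt_succ_of_le hp)]
  rw [eval_eq]
  exact Submodule.sum_mem _ fun j hj ↦ Submodule.smul_mem _ _
    (lowDegree_mono (mem_range_succ_iff.mp hj) (pow_mem_lowDegree wt_mem_lowDegree))

end LowDegree

section Strength

open scoped BigOperators

variable {n r w₀ : ℕ} {T : Finset (Fin n → ZMod 2)} {W : Finset ℕ}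

/-- A set of binary vectors has strength `r`, i.e. is an orthogonal array of strength `r`, if the
characters of weight `1, …, r` sum to zero over it. -/
def HasStrength (T : Finset (Fin n → ZMod 2)) (r : ℕ) : Prop :=
  ∀ a, a ≠ 0 → wt a ≤ r → ∑ x ∈ T, signChar a x = 0

theorem sum_signChar_eq_zero {a y : Fin n → ZMod 2} (hT : ∀ x ∈ T, x + y ∈ T)
    (hay : a ⬝ᵥ y ≠ 0) : ∑ x ∈ T, signChar a x = 0 := by
  have signChar_eq : signChar a y = -1 := by
    rw [signChar_apply]
    generalize a ⬝ᵥ y = b at hay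
    obtain rfl : b = 1 := by decide +revert
    exact pow_one _
  have add_add_self (x : Fin n → ZMod 2) : x + y + y = x := by
    rw [add_assoc, ZModModule.add_self, add_zero]
  have sum_eq_neg : ∑ x ∈ T, signChar a x = -∑ x ∈ T, signChar a x := by
    rw [← sum_neg_distrib]
    refine sum_nbij' (· + y) (· + y) hT hT (fun x _ ↦ add_add_self x) (fun x _ ↦ add_add_self x)
      fun x _ ↦ ?_
    rw [AddChar.map_add_eq_mul, signChar_eq, mul_neg_one, neg_neg]
  linarith

theorem hasStrength_univ : HasStrength (univ : Finset (Fin n → ZMod 2)) r := by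
  intro a ha _
  obtain ⟨y, hay⟩ : ∃ y, a ⬝ᵥ y ≠ 0 := by
    contrapose! ha
    exact dotProduct_eq_zero_iff.mp ha
  exact sum_signChar_eq_zero (fun x _ ↦ mem_univ (x + y)) hay

namespace HasStrength

theorem expect_eq_expect_univ (hT : HasStrength T r) (hne : T.Nonempty)
    {f : (Fin n → ZMod 2) → ℚ} (hf : f ∈ lowDegree n r) : 𝔼 x ∈ T, f x = 𝔼 x, f x := by
  induction hf using Submodule.span_induction with
  | zero => simp
  | add f g _ _ hf hg => simp only [Pi.add_apply, expect_add_distrib, hf, hg]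
  | smul c f _ hf => simp only [Pi.smul_apply, ← smul_expect, hf]
  | mem f hf =>
    obtain ⟨a, ha, rfl⟩ := hf
    by_cases ha0 : a = 0
    · simp [ha0, signChar_zero, expect_const hne]
    · rw [expect, expect, hT a ha0 ha, hasStrength_univ a ha0 ha, smul_zero, smul_zero]

open Polynomial in
/-- The polynomial with root set `W` has the same mean over `T` as over `𝔽₂ⁿ`, and over `T` only
the vectors of weight `w₀` contribute to it; the criterion so obtained does not involve `T`. -/
theorem exists_wt_eq_iff (hT : HasStrength T r) (hne : T.Nonempty) (hW : #W ≤ r) (hw₀ : w₀ ∉ W)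
    (hTW : ∀ x ∈ T, wt x ∈ insert w₀ W) :
    (∃ x ∈ T, wt x = w₀) ↔ 𝔼 x : Fin n → ZMod 2, ∏ w ∈ W, ((wt x : ℚ) - w) ≠ 0 := by
  set p : ℚ[X] := ∏ w ∈ W, (X - C (w : ℚ)) with hp
  have eval_p (x : ℚ) : p.eval x = ∏ w ∈ W, (x - w) := by simp [hp, eval_prod]
  have degree_p : p.natDegree ≤ r := by
    rwa [hp, natDegree_finsetProd_X_sub_C_eq_card]
  have eval_w₀ : p.eval (w₀ : ℚ) ≠ 0 := by
    rw [eval_p, prod_ne_zero_iff]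
    exact fun w hw h ↦ hw₀ (by rwa [Nat.cast_injective (sub_eq_zero.mp h)])
  have eval_wt (x) (hx : x ∈ T) : p.eval (wt x : ℚ) = if wt x = w₀ then p.eval (w₀ : ℚ) else 0 := by
    split_ifs with h
    · rw [h]
    · rw [eval_p, prod_eq_zero (mem_of_mem_insert_of_ne (hTW x hx) h) (sub_self _)]
  simp_rw [← eval_p]
  rw [← hT.expect_eq_expect_univ hne (eval_wt_mem_lowDegree degree_p), expect_congr rfl eval_wt,
    expect_eq_sum_div_card, ← sum_filter, sum_const, nsmul_eq_mul]
  simp [eval_w₀, hne.ne_empty, filter_eq_empty_iff]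

end HasStrength

open Classical in
theorem IsSelfDual.hasStrength_shadow {C : Submodule (ZMod 2) (Fin n → ZMod 2)}
    (hC : IsSelfDual C) (hmin : ∀ x ∈ C, x ≠ 0 → r < wt x) :
    HasStrength (shadow C).toFinset r := by
  intro a ha0 ha
  have haC : a ∉ C := fun haC ↦ (hmin a haC ha0).not_ge ha
  rw [hC.mem_iff] at haC
  push Not at haC
  obtain ⟨y, hy, hay⟩ := haC
  exact sum_signChar_eq_zero (fun x hx ↦ by
    simpa using hC.add_mem_shadow (Set.mem_toFinset.mp hx) hy) hay

/-- Since the shadow is closed under complements, `s ≤ wt x ≤ n - s = s + 4 * (d - 2)` on it. -/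
theorem IsSelfDual.exists_mem_shadow_wt_eq_iff {C : Submodule (ZMod 2) (Fin n → ZMod 2)}
    {t : Fin n → ZMod 2} {d s : ℕ} (hC : IsSelfDual C) (hn : n + 8 = 2 * s + 4 * d)
    (hmin : ∀ x ∈ C, x ≠ 0 → d ≤ wt x) (hshadow : ∀ x ∈ shadow C, s ≤ wt x)
    (ht : t ∈ shadow C) (hwt : wt t ≡ s [MOD 4]) :
    (∃ x ∈ shadow C, wt x = s) ↔
      𝔼 x : Fin n → ZMod 2,
        ∏ w ∈ (range (d - 2)).image fun j ↦ s + 4 * (j + 1), ((wt x : ℚ) - w) ≠ 0 := by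
  classical
  have wt_le (x) (hx : x ∈ shadow C) : wt x + s ≤ n := by
    have := hshadow _ (hC.add_mem_shadow hx hC.one_mem)
    have := wt_add_one_add_wt x
    lia
  have two_le : 2 ≤ d := by
    have := hshadow t ht
    have := wt_le t ht
    lia
  have wt_mem (x) (hx : x ∈ shadow C) :
      wt x ∈ insert s ((range (d - 2)).image fun j ↦ s + 4 * (j + 1)) := by
    have modEq : s ≡ wt x [MOD 4] := ((hC.wt_modEq_of_mem_shadow hx ht).trans hwt).symm
    have le_wt := hshadow x hx
    obtain ⟨j, hj⟩ := (Nat.modEq_iff_dvd' le_wt).mp modEq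
    have := wt_le x hx
    simp only [mem_insert, mem_image, mem_range]
    exact or_iff_not_imp_left.mpr fun hne ↦ ⟨j - 1, by lia, by lia⟩
  have strength : HasStrength (shadow C).toFinset (d - 2) :=
    hC.hasStrength_shadow fun x hx hx0 ↦ (Nat.sub_lt (by lia) two_pos).trans_le (hmin x hx hx0)
  simpa only [Set.mem_toFinset] using strength.exists_wt_eq_iff (w₀ := s)
    (Set.toFinset_nonempty.mpr ⟨t, ht⟩) (card_image_le.trans (card_range _).le) (by simp)
    fun x hx ↦ wt_mem x (Set.mem_toFinset.mp hx)

end Strength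

/-- Proposition 2.1(ii): the neighbors `N₁(C) = C₀ ∪ C₁` and `N₃(C) = C₀ ∪ C₃` of an
s-extremal (and extremal) singly even self-dual `[24k+20, 12k+10, 4k+4]` code are again
s-extremal singly even self-dual `[24k+20, 12k+10, 4k+4]` codes. -/
theorem sExtremal_neighbor_24k20 (k : ℕ)
    (C : Submodule (ZMod 2) (Fin (24 * k + 20) → ZMod 2))
    (hse : IsSinglyEvenSelfDual C)
    (hdim : Module.finrank (ZMod 2) C = 12 * k + 10)
    (hd : minWt C = 4 * k + 4)
    (hshadow : minWtSet (shadow C) = 4 * k + 6)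
    (t : Fin (24 * k + 20) → ZMod 2) (ht : t ∈ shadow C) :
    IsSinglyEvenSelfDual (neighborCode C t) ∧
    Module.finrank (ZMod 2) (neighborCode C t) = 12 * k + 10 ∧
    minWt (neighborCode C t) = 4 * k + 4 ∧
    minWtSet (shadow (neighborCode C t)) = 4 * k + 6 := by
  obtain ⟨hC, u, huC, hu4⟩ := hse
  obtain ⟨⟨c, hcC, hc0, hwtc⟩, hminC⟩ := (minWtSet_eq_iff (by lia)).mp hd
  obtain ⟨⟨s, hs, hwts⟩, hminS⟩ := (minWtSet_shadow_eq_iff (by lia)).mp hshadow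
  have hwtt : wt t % 4 = wt s % 4 := hC.wt_modEq_of_mem_shadow ht hs
  have ht4 : ¬ 4 ∣ wt t := by lia
  have hN : IsSelfDual (neighborCode C t) :=
    hC.isSelfDual_neighborCode ht (Nat.even_iff.mpr (by lia))
  have hminN : ∀ x ∈ neighborCode C t, x ≠ 0 → 4 * k + 4 ≤ wt x := fun x ↦
    hC.le_wt_of_mem_neighborCode ht hminC fun y hy ↦ le_trans (by lia) (hminS y hy)
  have hminSN : ∀ x ∈ shadow (neighborCode C t), 4 * k + 6 ≤ wt x := fun x ↦
    hC.le_wt_of_mem_shadow_neighborCode ht ht4 ⟨k + 1, by lia⟩ hminC hminS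
  have huN : u ∈ shadow (neighborCode C t) := hC.mem_shadow_neighborCode_of_mem ht ht4 huC hu4
  have hwtu : wt u ≡ 4 * k + 6 [MOD 4] := (hC.wt_mod_four_eq_two huC hu4).trans (by lia)
  refine ⟨⟨hN, t, mem_neighborCode_self C t, ht4⟩, by have := hN.two_mul_finrank; lia, ?_, ?_⟩
  · exact (minWtSet_eq_iff (by lia)).mpr
      ⟨⟨c, evenSub_subset_neighborCode C t ⟨hcC, by lia⟩, hc0, hwtc⟩, hminN⟩
  · exact (minWtSet_shadow_eq_iff (by lia)).mpr
      ⟨(hN.exists_mem_shadow_wt_eq_iff (by lia) hminN hminSN huN hwtu).mpr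
        ((hC.exists_mem_shadow_wt_eq_iff (by lia) hminC hminS hs (by rw [hwts])).mp ⟨s, hs, hwts⟩),
        hminSN⟩
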